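/- Let N and m be positive natural numbers and, for k = 1, …, N, let U_k and V_k be n × m real matrices. Define the Nm × Nm block matrix M whose (k, l) block (of size m × m) is V_kᵀ U_l + (δ_{kl}) I_m, i.e. M_{kl} = V_kᵀ U_l for k ≠ l and M_{kk} = I_m + V_kᵀ U_k. If M is invertible, then I_n + Σ_{k=1}^{N} U_k V_kᵀ is invertible and (I_n + Σ_{k=1}^{N} U_k V_kᵀ)⁻¹ = I_n − U M⁻¹ Vᵀ, where U = [U_1, …, U_N] is the n × Nm horizontal concatenation of the U_k and Vᵀ = [V_1ᵀ; …; V_Nᵀ] is the Nm × n vertical concatenation of the V_kᵀ. -/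

import Mathlib

open Matrix BigOperators

section RankCorrection

variable {R n p : Type*} [CommRing R] [Fintype n] [DecidableEq n] [Fintype p] [DecidableEq p]

theorem isUnit_add_mul_iff {A : Matrix n n R} (hA : IsUnit A) (U : Matrix n p R)
    (V : Matrix p n R) : IsUnit (A + U * V) ↔ IsUnit (1 + V * A⁻¹ * U) := by
  have hdet : IsUnit A.det := (isUnit_iff_isUnit_det A).1 hA
  rw [isUnit_iff_isUnit_det, isUnit_iff_isUnit_det, det_add_mul _ _ hdet, IsUnit.mul_iff,
    and_iff_right hdet]

theorem inv_add_mul_eq_sub {A : Matrix n n R} (hA : IsUnit A) (U : Matrix n p R)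
    (V : Matrix p n R) (hM : IsUnit (1 + V * A⁻¹ * U)) :
    (A + U * V)⁻¹ = A⁻¹ - A⁻¹ * U * (1 + V * A⁻¹ * U)⁻¹ * V * A⁻¹ := by
  simpa only [inv_one, Matrix.mul_one] using
    add_mul_mul_inv_eq_sub A U 1 V hA isUnit_one (by rwa [inv_one])

end RankCorrection

section BlockConcatenation

variable {R ι κ m n : Type*}

/-- The horizontal concatenation `[U₁, …, U_N]` of a family of matrices of the same size, with
columns indexed by pairs (block, column within the block). Together with `blockCol` it turns a sum
of products into a single product. -/
def blockRow (U : ι → Matrix m κ R) : Matrix m (ι × κ) R :=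
  of fun i q => U q.1 i q.2

/-- The vertical concatenation `[V₁; …; V_N]` of a family of matrices of the same size, with rows
indexed by pairs (block, row within the block); the counterpart of `blockRow`. -/
def blockCol (V : ι → Matrix κ n R) : Matrix (ι × κ) n R :=
  of fun q j => V q.1 q.2 j

theorem eq_blockRow_iff {X : Matrix m (ι × κ) R} {U : ι → Matrix m κ R} :
    X = blockRow U ↔ ∀ i k j, X i (k, j) = U k i j := by
  simp only [← Matrix.ext_iff, Prod.forall, blockRow, of_apply]

theorem eq_blockCol_iff {X : Matrix (ι × κ) n R} {V : ι → Matrix κ n R} :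
    X = blockCol V ↔ ∀ k i j, X (k, i) j = V k i j := by
  simp only [← Matrix.ext_iff, Prod.forall, blockCol, of_apply]

theorem blockRow_mul_blockCol [NonUnitalNonAssocSemiring R] [Fintype ι] [Fintype κ]
    (U : ι → Matrix m κ R) (V : ι → Matrix κ n R) :
    blockRow U * blockCol V = ∑ k, U k * V k := by
  ext i j
  simp only [blockRow, blockCol, mul_apply, of_apply, Matrix.sum_apply, Fintype.sum_prod_type]

theorem blockCol_mul_mul_blockRow_apply {ι' κ' : Type*} [NonUnitalNonAssocSemiring R]
    [Fintype m] [Fintype n] (V : ι → Matrix κ m R) (B : Matrix m n R) (U : ι' → Matrix n κ' R)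
    (k : ι) (l : ι') (i : κ) (j : κ') :
    (blockCol V * B * blockRow U) (k, i) (l, j) = (V k * B * U l) i j :=
  rfl

end BlockConcatenation

theorem smw_identity_general {R ι κ n : Type*} [CommRing R] [Fintype ι] [DecidableEq ι]
    [Fintype κ] [DecidableEq κ] [Fintype n] [DecidableEq n]
    {A : Matrix n n R} (hA : IsUnit A) (U : ι → Matrix n κ R) (V : ι → Matrix κ n R)
    {M : Matrix (ι × κ) (ι × κ) R}
    (hM : ∀ k l i j, M (k, i) (l, j) =
      (V k * A⁻¹ * U l) i j + (if k = l ∧ i = j then 1 else 0))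
    (hMu : IsUnit M) :
    IsUnit (A + ∑ k, U k * V k) ∧
      (A + ∑ k, U k * V k)⁻¹ = A⁻¹ - A⁻¹ * blockRow U * M⁻¹ * blockCol V * A⁻¹ := by
  have hM_eq : M = 1 + blockCol V * A⁻¹ * blockRow U := by
    ext ⟨k, i⟩ ⟨l, j⟩
    simp only [hM, Matrix.add_apply, blockCol_mul_mul_blockRow_apply, one_apply,
      Prod.mk.injEq, add_comm]
  subst hM_eq
  rw [← blockRow_mul_blockCol]
  exact ⟨(isUnit_add_mul_iff hA _ _).2 hMu, inv_add_mul_eq_sub hA _ _ hMu⟩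

/-- Identity-matrix case of the generalized Sherman–Morrison–Woodbury formula:
if the capacitance block matrix `M` (with `(k,l)` block `Vₖᵀ Uₗ + δₖₗ Iₘ`) is
invertible, then `I + ∑ Uₖ Vₖᵀ` is invertible with inverse `I − U M⁻¹ Vᵀ`. -/
theorem smw_identity (n N m : ℕ) (hN : 0 < N) (hm : 0 < m)
    (U V : Fin N → Matrix (Fin n) (Fin m) ℝ)
    (M : Matrix (Fin N × Fin m) (Fin N × Fin m) ℝ)
    (hM : ∀ (k l : Fin N) (i j : Fin m),
      M (k, i) (l, j) = ((V k)ᵀ * U l) i j + (if k = l ∧ i = j then 1 else 0))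
    (hMu : IsUnit M)
    (Ubig : Matrix (Fin n) (Fin N × Fin m) ℝ)
    (hUbig : ∀ (i : Fin n) (k : Fin N) (j : Fin m), Ubig i (k, j) = U k i j)
    (Vbig : Matrix (Fin N × Fin m) (Fin n) ℝ)
    (hVbig : ∀ (k : Fin N) (j : Fin m) (i : Fin n), Vbig (k, j) i = V k i j) :
    IsUnit ((1 : Matrix (Fin n) (Fin n) ℝ) + ∑ k : Fin N, U k * (V k)ᵀ) ∧
      ((1 : Matrix (Fin n) (Fin n) ℝ) + ∑ k : Fin N, U k * (V k)ᵀ)⁻¹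
        = 1 - Ubig * M⁻¹ * Vbig := by
  rw [eq_blockRow_iff.2 hUbig, (eq_blockCol_iff (V := fun k => (V k)ᵀ)).2 hVbig]
  simpa only [inv_one, Matrix.one_mul, Matrix.mul_one] using
    smw_identity_general isUnit_one U (fun k => (V k)ᵀ) (by simpa using hM) hMu
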